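/- Let → be a type-invariant transition relation. For every noncontracting loop r = (c₀,…,c_N) there exists a stretching loop r' = (c₀',…,c_N') (a run with respect to →) of the same length, with the same state at every position, such that c_i ≼* c_i' for all 0 ≤ i ≤ N. -/

import Mathlib

/-!
Apply one and the same map to every word of the run, namely `insertGaps g`, which inserts `g u`
zeros directly behind each nonempty prefix `u` of a word. Such a map preserves longest common
prefixes and the lexicographic order, and it only widens distances. If it fixes the constants, it
preserves all types over `C`, so the image of the run is a run, pointwise `≼*`-above the original.

It remains to choose `g` so that the image loop is stretching. Let `h` be the induced isomorphism
between the two ends of the loop. Noncontraction makes `h` the identity on the prefixes of a fixed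
node, so distances below fixed nodes do not change, and a node moved by `h` is never sent to a
prefix of a constant. For a moved node `e` it suffices that the gap `g (h e)` is at least the length
of `insertGaps g e`, which depends only on the values of `g` at prefixes of `e`. So `g`, supported
on images of moved nodes, can be chosen one value after the other provided that the relation
"`h x` is a prefix of `y`" between moved nodes is acyclic. It is: if `h` moves `x` up
lexicographically, then `x < h x ≤ y`. If `h` moves `x` down, then `y` cannot lie above `x`, as
the words with prefix `h x` form a lexicographic interval and `h x` is not a prefix of `x` by
noncontraction; hence `y < x`, and `h y ≤ h x ≤ y` shows that `y` is moved down as well. The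
moved-up nodes in increasing order followed by the moved-down nodes in decreasing order are thus a
linearization.
-/

namespace CLTL

/-- A word is a finite sequence of rationals. -/
abbrev Word := List ℚ

/-- Lexicographic order on lists over a linear order: `w ⊑ v` iff `w` is a prefix of `v`,
or they branch at some position with the letter of `w` smaller. -/
def lexLe {α : Type*} [LinearOrder α] (w v : List α) : Prop :=
  w <+: v ∨ ∃ (p : List α) (a b : α), a < b ∧ (p ++ [a]) <+: w ∧ (p ++ [b]) <+: v

/-- Longest common prefix of two lists. -/
def lcp {α : Type*} [DecidableEq α] : List α → List α → List α
  | a :: w, b :: v => if a = b then a :: lcp w v else []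
  | _, _ => []

/-- Iterated longest common prefix of a nonempty list of words. -/
def listLCP : List Word → Word
  | [] => []
  | [x] => x
  | x :: xs => lcp x (listLCP xs)

/-- Insertion of an `m`-gap at `u`. -/
def iota (u : Word) (m : ℕ) (w : Word) : Word :=
  if u <+: w then u ++ List.replicate m 0 ++ w.drop u.length else w

/-- The maximal common ancestor tree of a tuple `w` together with constants `C`:
`{ε}` together with all iterated longest common prefixes of nonempty subsets of entries. -/
def MCAT (C : List Word) {k : ℕ} (w : Fin k → Word) : Set Word :=
  insert [] { x | ∃ I : Finset (Fin (k + C.length)),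
    I.Nonempty ∧ x = listLCP (I.toList.map (Fin.append w C.get)) }

/-- `h` is the induced isomorphism witnessing `typ_C(w) = typ_C(v)`. -/
def IsInducedIso (C : List Word) {k : ℕ} (w v : Fin k → Word) (h : Word → Word) : Prop :=
  Set.BijOn h (MCAT C w) (MCAT C v) ∧
  (∀ x ∈ MCAT C w, ∀ y ∈ MCAT C w,
    (x <+: y ↔ h x <+: h y) ∧ (lexLe x y ↔ lexLe (h x) (h y))) ∧
  (∀ c ∈ C, h c = c) ∧
  (∀ i : Fin k, h (w i) = v i)

/-- `typ_C(w) = typ_C(v)`. -/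
def SameTyp (C : List Word) {k : ℕ} (w v : Fin k → Word) : Prop :=
  ∃ h : Word → Word, IsInducedIso C w v h

/-- The stretching condition on an isomorphism `h` of `MCAT_C(w)`:
`|h e| - |h d| ≥ |e| - |d|` whenever `d` is a proper prefix of `e`. -/
def StretchCond (C : List Word) {k : ℕ} (w : Fin k → Word) (h : Word → Word) : Prop :=
  ∀ d ∈ MCAT C w, ∀ e ∈ MCAT C w, d <+: e → d ≠ e →
    e.length + (h d).length ≤ (h e).length + d.length

/-- `w ≼* v` for tuples of words. -/
def Stretch (C : List Word) {k : ℕ} (w v : Fin k → Word) : Prop :=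
  ∃ h : Word → Word, IsInducedIso C w v h ∧ StretchCond C w h

/-- `≼*` on configurations. -/
def ConfigLe (C : List Word) {Q : Type*} {n : ℕ}
    (c d : Q × (Fin n → Word)) : Prop :=
  c.1 = d.1 ∧ Stretch C c.2 d.2

/-- A transition relation is type-invariant. -/
def TypeInvariant (C : List Word) {Q : Type*} {n : ℕ}
    (step : (Q × (Fin n → Word)) → (Q × (Fin n → Word)) → Prop) : Prop :=
  ∀ (q p : Q) (w v w' v' : Fin n → Word),
    step (q, w) (p, v) → SameTyp C (Fin.append w v) (Fin.append w' v') →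
      step (q, w') (p, v')

/-- Finite runs, indexed by `Fin (N+1)`. -/
def IsFinRun {Q : Type*} {n : ℕ}
    (step : (Q × (Fin n → Word)) → (Q × (Fin n → Word)) → Prop)
    {N : ℕ} (r : Fin (N + 1) → Q × (Fin n → Word)) : Prop :=
  ∀ i : Fin N, step (r i.castSucc) (r i.succ)

/-- Infinite runs. -/
def IsInfRun {Q : Type*} {n : ℕ}
    (step : (Q × (Fin n → Word)) → (Q × (Fin n → Word)) → Prop)
    (r : ℕ → Q × (Fin n → Word)) : Prop :=
  ∀ i : ℕ, step (r i) (r (i + 1))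

/-- The pair `(w, v)` (of tuples of equal type) is contracting. -/
def ContractingPair (C : List Word) {k : ℕ} (w v : Fin k → Word) : Prop :=
  ∃ h : Word → Word, IsInducedIso C w v h ∧
    ((∃ d ∈ MCAT C w, h d <+: d ∧ h d ≠ d) ∨
     (∃ d ∈ MCAT C w, ∃ e ∈ MCAT C w,
        d <+: e ∧ d ≠ e ∧ h e = e ∧ d <+: h d ∧ d ≠ h d))

/-- A set of words `T` has `n`-gaps above `B`. -/
def HasGaps (n : ℕ) (T B : Set Word) : Prop :=
  ∀ d ∈ T, ∀ e ∈ T, d <+: e → d ≠ e → (∀ b ∈ B, ¬ e <+: b) → n + d.length < e.length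

section Lex

variable {α : Type*} [LinearOrder α]

theorem lexLe_of_lt {w v : List α} (h : w < v) : lexLe w v := by
  induction h with
  | nil => exact .inl List.nil_prefix
  | rel hab => exact .inr ⟨[], _, _, hab, by simp, by simp⟩
  | @cons c _ _ _ ih =>
    rcases ih with hp | ⟨p, a, b, hab, hw, hv⟩
    · exact .inl (by simpa using hp)
    · exact .inr ⟨c :: p, a, b, hab, by simpa using hw, by simpa using hv⟩

theorem lexLe_iff_le {w v : List α} : lexLe w v ↔ w ≤ v := by
  constructor
  · rintro (hp | ⟨p, a, b, hab, ⟨s, rfl⟩, ⟨t, rfl⟩⟩)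
    · exact not_lt.1 hp.le
    · rw [List.append_assoc, List.append_assoc]
      exact (List.append_left_lt (List.Lex.rel hab)).le
  · intro hle
    rcases hle.eq_or_lt with rfl | hlt
    · exact .inl List.prefix_rfl
    · exact lexLe_of_lt hlt

theorem le_of_prefix {w v : List α} (h : w <+: v) : w ≤ v := lexLe_iff_le.1 (.inl h)

theorem prefix_of_le_of_le {p x y : List α} (hpx : p ≤ x) (hxy : x ≤ y) (hpy : p <+: y) :
    p <+: x := by
  rcases lexLe_iff_le.2 hpx with h | ⟨q, a, b, hab, hqp, hqx⟩
  · exact h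
  · have hyx : y ≤ x := lexLe_iff_le.1 (.inr ⟨q, a, b, hab, hqp.trans hpy, hqx⟩)
    rwa [le_antisymm hxy hyx]

end Lex

section TreeEmbedding

variable {α : Type*}

theorem lcp_append [DecidableEq α] (p w v : List α) : lcp (p ++ w) (p ++ v) = p ++ lcp w v := by
  induction p with
  | nil => rfl
  | cons a p ih => simp [lcp, ih]

theorem lcp_eq_left_iff [DecidableEq α] {w v : List α} : lcp w v = w ↔ w <+: v := by
  induction w generalizing v with
  | nil => simp [lcp]
  | cons a w ih =>
    cases v with
    | nil => simp [lcp]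
    | cons b v => by_cases hab : a = b <;> simp [lcp, hab, ih]

/-- A map of the tree of words into itself that preserves the root, longest common prefixes and
the strict lexicographic order. Applying one to all entries of a tuple preserves the type of the
tuple, provided that the constants are fixed. -/
structure IsTreeEmbedding [LinearOrder α] (φ : List α → List α) : Prop where
  map_nil : φ [] = []
  map_lcp (w v : List α) : φ (lcp w v) = lcp (φ w) (φ v)
  strictMono : StrictMono φ

namespace IsTreeEmbedding

variable [LinearOrder α] {φ : List α → List α}

theorem prefix_iff (hφ : IsTreeEmbedding φ) {w v : List α} : φ w <+: φ v ↔ w <+: v := by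
  rw [← lcp_eq_left_iff, ← hφ.map_lcp, hφ.strictMono.injective.eq_iff, lcp_eq_left_iff]

theorem lexLe_iff (hφ : IsTreeEmbedding φ) {w v : List α} : lexLe (φ w) (φ v) ↔ lexLe w v := by
  simp only [lexLe_iff_le, hφ.strictMono.le_iff_le]

end IsTreeEmbedding

end TreeEmbedding

section InsertGaps

variable {α : Type*} [Zero α]

/-- Insertion of `g u` zeros directly behind every nonempty prefix `u` of a word. This carries out
the gap insertions `iota u (g u)` for all `u ≠ []` at once, with `u` ranging over the prefixes of
the original word; the value `g []` is ignored, so that the empty word is fixed. -/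
def insertGaps (g : List α → ℕ) : List α → List α
  | [] => []
  | a :: w => a :: (List.replicate (g [a]) 0 ++ insertGaps (fun u => g (a :: u)) w)

theorem insertGaps_append (g : List α → ℕ) (d t : List α) :
    insertGaps g (d ++ t) = insertGaps g d ++ insertGaps (fun u => g (d ++ u)) t := by
  induction d generalizing g with
  | nil => simp [insertGaps]
  | cons a d ih => simp [insertGaps, ih]

theorem insertGaps_congr {g g' : List α → ℕ} {w : List α} (h : ∀ p, p <+: w → g p = g' p) :
    insertGaps g w = insertGaps g' w := by
  induction w generalizing g g' with
  | nil => rfl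
  | cons a w ih =>
    simp only [insertGaps]
    rw [h [a] (by simp), ih fun p hp => h (a :: p) (by simpa using hp)]

theorem insertGaps_zero (w : List α) : insertGaps 0 w = w := by
  induction w with
  | nil => rfl
  | cons a w ih => exact congrArg (List.cons a) ih

theorem length_le_length_insertGaps (g : List α → ℕ) (w : List α) :
    w.length ≤ (insertGaps g w).length := by
  induction w generalizing g with
  | nil => simp
  | cons a w ih =>
    have := ih fun u => g (a :: u)
    simp only [insertGaps, List.length_cons, List.length_append]
    omega

theorem length_add_length_insertGaps_le (g : List α → ℕ) {d e : List α} (h : d <+: e) :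
    e.length + (insertGaps g d).length ≤ (insertGaps g e).length + d.length := by
  obtain ⟨t, rfl⟩ := h
  have := length_le_length_insertGaps (fun u => g (d ++ u)) t
  simp only [insertGaps_append, List.length_append]
  omega

theorem length_insertGaps_add_gap_le (g : List α → ℕ) {d e : List α} (h : d <+: e)
    (hne : d ≠ e) : (insertGaps g d).length + g e ≤ (insertGaps g e).length := by
  obtain ⟨t, rfl⟩ := h
  have ht : t ≠ [] := by simpa using hne
  obtain ⟨s, a, rfl⟩ := (List.eq_nil_or_concat' t).resolve_left ht
  simp only [← List.append_assoc, insertGaps_append, insertGaps, List.length_append,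
    List.length_cons, List.length_replicate]
  omega

theorem insertGaps_lcp [DecidableEq α] (g : List α → ℕ) (w v : List α) :
    insertGaps g (lcp w v) = lcp (insertGaps g w) (insertGaps g v) := by
  induction w generalizing g v with
  | nil => simp [lcp, insertGaps]
  | cons a w ih =>
    cases v with
    | nil => simp [lcp, insertGaps]
    | cons b v =>
      by_cases hab : a = b
      · subst hab
        simp [lcp, insertGaps, ih, lcp_append]
      · simp [lcp, insertGaps, hab]

theorem insertGaps_strictMono [LinearOrder α] (g : List α → ℕ) : StrictMono (insertGaps g) := by
  intro w v h
  induction h generalizing g with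
  | nil => exact List.Lex.nil
  | rel hab => exact List.Lex.rel hab
  | cons _ ih => exact List.Lex.cons (List.append_left_lt (ih _))

theorem isTreeEmbedding_insertGaps [LinearOrder α] (g : List α → ℕ) :
    IsTreeEmbedding (insertGaps g) where
  map_nil := rfl
  map_lcp := insertGaps_lcp g
  strictMono := insertGaps_strictMono g

end InsertGaps

section GapChoice

variable {α : Type*}

theorem exists_gaps_of_key_lt [Zero α] {κ : Type*} [LinearOrder κ] (S : Finset (List α))
    (f : List α → List α) (key : List α → κ)
    (hkey : ∀ x ∈ S, ∀ y ∈ S, f x <+: y → key x < key y) :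
    ∃ g : List α → ℕ, (∀ p, g p ≠ 0 → ∃ x ∈ S, f x = p) ∧
      ∀ x ∈ S, (insertGaps g x).length ≤ g (f x) := by
  classical
  induction S using Finset.induction_on_max_value key with
  | empty => exact ⟨0, by simp⟩
  | insert a s _ hmax ih =>
    obtain ⟨g, hsupp, hgap⟩ := ih fun x hx y hy =>
      hkey x (Finset.mem_insert_of_mem hx) y (Finset.mem_insert_of_mem hy)
    -- The key of `a` is maximal, so no word of `insert a s` sees the gap behind `f a`.
    let g' := g + Pi.single (f a) (insertGaps g a).length
    have hunseen : ∀ y ∈ insert a s, insertGaps g' y = insertGaps g y := by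
      intro y hy
      refine insertGaps_congr fun p hp => ?_
      have hpa : p ≠ f a := by
        rintro rfl
        have hle : key y ≤ key a := by
          rcases Finset.mem_insert.1 hy with rfl | hys
          · exact le_rfl
          · exact hmax y hys
        exact hle.not_gt (hkey a (Finset.mem_insert_self a s) y hy hp)
      simp [g', hpa]
    refine ⟨g', fun p hp => ?_, fun x hx => ?_⟩
    · by_cases hpa : p = f a
      · exact ⟨a, Finset.mem_insert_self a s, hpa.symm⟩
      · obtain ⟨x, hx, hxp⟩ := hsupp p (by simpa [g', hpa] using hp)
        exact ⟨x, Finset.mem_insert_of_mem hx, hxp⟩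
    · rw [hunseen x hx]
      rcases Finset.mem_insert.1 hx with rfl | hxs
      · simp [g']
      · exact (hgap x hxs).trans (Nat.le_add_right _ _)

/-- A key for ordering words: the words that `h` does not move down come first, in lexicographic
order, followed by the words that `h` moves down, in reverse lexicographic order. The gap behind
`h x` is chosen when the turn of `x` comes in this order. -/
def gapKey [LinearOrder α] (h : List α → List α) (x : List α) : List α ⊕ₗ (List α)ᵒᵈ :=
  if x ≤ h x then toLex (.inl x) else toLex (.inr (OrderDual.toDual x))

theorem gapKey_lt_of_map_prefix [LinearOrder α] {S : Set (List α)} {h : List α → List α}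
    (hmono : MonotoneOn h S) (hnot : ∀ x ∈ S, ¬ h x <+: x) {x y : List α} (hx : x ∈ S)
    (hy : y ∈ S) (hxy : h x <+: y) : gapKey h x < gapKey h y := by
  have hle : h x ≤ y := le_of_prefix hxy
  unfold gapKey
  by_cases hup : x ≤ h x
  · have hlt : x < y := (hup.trans hle).lt_of_ne (by rintro rfl; exact hnot x hx hxy)
    rw [if_pos hup]
    split_ifs
    · exact Sum.Lex.inl_lt_inl_iff.2 hlt
    · exact Sum.Lex.inl_lt_inr _ _
  · have hlt : y < x := lt_of_not_ge fun hle' =>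
      hnot x hx (prefix_of_le_of_le (not_le.1 hup).le hle' hxy)
    have hdown : ¬ y ≤ h y := fun hyup => by
      have heq : h y = y := le_antisymm ((hmono hy hx hlt.le).trans hle) hyup
      exact hnot y hy (by rw [heq])
    rw [if_neg hup, if_neg hdown]
    exact Sum.Lex.inr_lt_inr_iff.2 (OrderDual.toDual_lt_toDual.2 hlt)

end GapChoice

section AncestorTree

variable {C : List Word} {k : ℕ} {w v u : Fin k → Word} {h h' ψ φ : Word → Word}

theorem append_mem_MCAT (C : List Word) (w : Fin k → Word) (j : Fin (k + C.length)) :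
    Fin.append w C.get j ∈ MCAT C w :=
  .inr ⟨{j}, by simp, by simp [listLCP]⟩

theorem apply_mem_MCAT (C : List Word) (w : Fin k → Word) (i : Fin k) : w i ∈ MCAT C w := by
  simpa using append_mem_MCAT C w (Fin.castAdd _ i)

theorem mem_MCAT_of_mem (w : Fin k → Word) {c : Word} (hc : c ∈ C) : c ∈ MCAT C w := by
  obtain ⟨j, rfl⟩ := List.mem_iff_get.1 hc
  simpa using append_mem_MCAT C w (Fin.natAdd k j)

theorem finite_MCAT (C : List Word) (w : Fin k → Word) : (MCAT C w).Finite := by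
  refine Set.Finite.insert _ ((Set.finite_range fun I : Finset (Fin (k + C.length)) =>
    listLCP (I.toList.map (Fin.append w C.get))).subset ?_)
  rintro _ ⟨I, -, rfl⟩
  exact ⟨I, rfl⟩

theorem IsTreeEmbedding.map_listLCP (hφ : IsTreeEmbedding φ) (l : List Word) :
    φ (listLCP l) = listLCP (l.map φ) := by
  induction l with
  | nil => exact hφ.map_nil
  | cons x l ih =>
    cases l with
    | nil => rfl
    | cons y l =>
      simp only [listLCP, List.map_cons, hφ.map_lcp] at ih ⊢
      rw [ih]

theorem fin_append_comp {β γ : Type*} {m n : ℕ} (f : β → γ) (x : Fin m → β) (y : Fin n → β) :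
    Fin.append (f ∘ x) (f ∘ y) = f ∘ Fin.append x y := by
  funext i
  refine Fin.addCases (fun i => ?_) (fun i => ?_) i <;> simp

theorem IsTreeEmbedding.MCAT_comp (hφ : IsTreeEmbedding φ) (hC : ∀ c ∈ C, φ c = c)
    (w : Fin k → Word) : MCAT C (φ ∘ w) = φ '' MCAT C w := by
  have hget : C.get = φ ∘ C.get := funext fun j => (hC _ (List.get_mem C j)).symm
  have hentries : Fin.append (φ ∘ w) C.get = φ ∘ Fin.append w C.get := by
    conv_lhs => rw [hget]
    exact fin_append_comp φ w C.get
  unfold MCAT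
  rw [Set.image_insert_eq, hφ.map_nil, hentries]
  congr 1
  ext x
  simp only [← List.map_map, ← hφ.map_listLCP, Set.mem_ofPred_eq, Set.mem_image]
  grind

theorem IsInducedIso.trans (hh : IsInducedIso C w v h) (hh' : IsInducedIso C v u h') :
    IsInducedIso C w u (h' ∘ h) := by
  obtain ⟨hbij, hord, hconst, htup⟩ := hh
  obtain ⟨hbij', hord', hconst', htup'⟩ := hh'
  refine ⟨hbij'.comp hbij, fun x hx y hy => ?_, fun c hc => ?_, fun i => ?_⟩
  · have hord'' := hord' _ (hbij.mapsTo hx) _ (hbij.mapsTo hy)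
    exact ⟨(hord x hx y hy).1.trans hord''.1, (hord x hx y hy).2.trans hord''.2⟩
  · rw [Function.comp_apply, hconst c hc, hconst' c hc]
  · rw [Function.comp_apply, htup, htup']

theorem IsInducedIso.symm (hh : IsInducedIso C w v h) (hψ : Set.LeftInvOn ψ h (MCAT C w)) :
    IsInducedIso C v w ψ := by
  obtain ⟨hbij, hord, hconst, htup⟩ := hh
  refine ⟨?_, ?_, fun c hc => ?_, fun i => ?_⟩
  · have hψ' : Set.RightInvOn ψ h (MCAT C v) := hbij.image_eq ▸ hψ.rightInvOn_image
    exact hbij.symm ⟨hψ', hψ⟩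
  · rw [← hbij.image_eq]
    rintro _ ⟨x, hx, rfl⟩ _ ⟨y, hy, rfl⟩
    rw [hψ hx, hψ hy]
    exact ⟨(hord x hx y hy).1.symm, (hord x hx y hy).2.symm⟩
  · conv_lhs => rw [← hconst c hc]
    exact hψ (mem_MCAT_of_mem w hc)
  · rw [← htup i]
    exact hψ (apply_mem_MCAT C w i)

theorem IsTreeEmbedding.isInducedIso (hφ : IsTreeEmbedding φ) (hC : ∀ c ∈ C, φ c = c)
    (w : Fin k → Word) : IsInducedIso C w (φ ∘ w) φ := by
  refine ⟨?_, fun x _ y _ => ⟨hφ.prefix_iff.symm, hφ.lexLe_iff.symm⟩, hC, fun _ => rfl⟩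
  rw [hφ.MCAT_comp hC]
  exact hφ.strictMono.injective.injOn.bijOn_image

theorem stretch_insertGaps {g : Word → ℕ} (hg : ∀ c ∈ C, insertGaps g c = c)
    (w : Fin k → Word) : Stretch C w (insertGaps g ∘ w) :=
  ⟨insertGaps g, (isTreeEmbedding_insertGaps g).isInducedIso hg w,
    fun _ _ _ _ hde _ => length_add_length_insertGaps_le g hde⟩

theorem IsInducedIso.stretch_comp (hh : IsInducedIso C w v h) (hφ : IsTreeEmbedding φ)
    (hC : ∀ c ∈ C, φ c = c)
    (hlen : ∀ d ∈ MCAT C w, ∀ e ∈ MCAT C w, d <+: e → d ≠ e →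
      (φ e).length + (φ (h d)).length ≤ (φ (h e)).length + (φ d).length) :
    Stretch C (φ ∘ w) (φ ∘ v) := by
  have hinv : Function.LeftInverse (Function.invFun φ) φ :=
    Function.leftInverse_invFun hφ.strictMono.injective
  refine ⟨_, ((hφ.isInducedIso hC w).symm (hinv.leftInvOn _)).trans
    (hh.trans (hφ.isInducedIso hC v)), ?_⟩
  unfold StretchCond
  rw [hφ.MCAT_comp hC]
  rintro _ ⟨d, hd, rfl⟩ _ ⟨e, he, rfl⟩ hde hne
  simp only [Function.comp_apply, hinv d, hinv e]
  exact hlen d hd e he (hφ.prefix_iff.1 hde) (ne_of_apply_ne φ hne)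

theorem TypeInvariant.isFinRun_map {Q : Type*} {n N : ℕ}
    {step : (Q × (Fin n → Word)) → (Q × (Fin n → Word)) → Prop} (hstep : TypeInvariant C step)
    (hφ : IsTreeEmbedding φ) (hC : ∀ c ∈ C, φ c = c)
    {r : Fin (N + 1) → Q × (Fin n → Word)} (hr : IsFinRun step r) :
    IsFinRun step fun i => ((r i).1, φ ∘ (r i).2) := by
  refine fun i => hstep _ _ _ _ _ _ (hr i) ⟨φ, ?_⟩
  rw [fin_append_comp]
  exact hφ.isInducedIso hC _

end AncestorTree

section Noncontracting

variable {C : List Word} {k : ℕ} {w v : Fin k → Word} {h : Word → Word}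

namespace IsInducedIso

theorem map_eq_of_map_prefix_self (hh : IsInducedIso C w v h) (hnc : ¬ ContractingPair C w v)
    {d : Word} (hd : d ∈ MCAT C w) (hp : h d <+: d) : h d = d := by
  by_contra hne
  exact hnc ⟨h, hh, .inl ⟨d, hd, hp, hne⟩⟩

theorem map_eq_of_prefix_fixed (hh : IsInducedIso C w v h) (hnc : ¬ ContractingPair C w v)
    {d e : Word} (hd : d ∈ MCAT C w) (he : e ∈ MCAT C w) (hde : d <+: e) (hfix : h e = e) :
    h d = d := by
  have hhd : h d <+: e := by simpa only [hfix] using (hh.2.1 d hd e he).1.1 hde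
  rcases List.prefix_or_prefix_of_prefix hhd hde with hdown | hup
  · exact hh.map_eq_of_map_prefix_self hnc hd hdown
  · by_contra hne
    have hde' : d ≠ e := by
      rintro rfl
      exact hne hfix
    exact hnc ⟨h, hh, .inr ⟨d, hd, e, he, hde, hde', hfix, hup, Ne.symm hne⟩⟩

theorem map_eq_of_map_prefix_const (hh : IsInducedIso C w v h) (hnc : ¬ ContractingPair C w v)
    {d c : Word} (hd : d ∈ MCAT C w) (hc : c ∈ C) (hp : h d <+: c) : h d = d := by
  have hcw : c ∈ MCAT C w := mem_MCAT_of_mem w hc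
  have hfix : h c = c := hh.2.2.1 c hc
  exact hh.map_eq_of_prefix_fixed hnc hd hcw ((hh.2.1 d hd c hcw).1.2 (by rwa [hfix])) hfix

theorem monotoneOn (hh : IsInducedIso C w v h) : MonotoneOn h (MCAT C w) :=
  fun x hx y hy hxy => lexLe_iff_le.1 ((hh.2.1 x hx y hy).2.1 (lexLe_iff_le.2 hxy))

theorem exists_gaps (hh : IsInducedIso C w v h) (hnc : ¬ ContractingPair C w v) :
    ∃ g : Word → ℕ, (∀ c ∈ C, insertGaps g c = c) ∧
      ∀ e ∈ MCAT C w, h e ≠ e → (insertGaps g e).length ≤ g (h e) := by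
  have hfin : {e ∈ MCAT C w | h e ≠ e}.Finite := (finite_MCAT C w).subset (Set.sep_subset _ _)
  have hkey : ∀ x ∈ hfin.toFinset, ∀ y ∈ hfin.toFinset, h x <+: y →
      gapKey h x < gapKey h y := by
    intro x hx y hy
    refine gapKey_lt_of_map_prefix (hh.monotoneOn.mono (Set.sep_subset _ _)) ?_
      (hfin.mem_toFinset.1 hx) (hfin.mem_toFinset.1 hy)
    rintro d ⟨hd, hmoved⟩ hp
    exact hmoved (hh.map_eq_of_map_prefix_self hnc hd hp)
  obtain ⟨g, hsupp, hgap⟩ := exists_gaps_of_key_lt hfin.toFinset h (gapKey h) hkey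
  refine ⟨g, fun c hc => ?_, fun e he hmoved => hgap e (hfin.mem_toFinset.2 ⟨he, hmoved⟩)⟩
  rw [insertGaps_congr (g' := 0), insertGaps_zero]
  intro p hp
  by_contra hgp
  obtain ⟨e, he, rfl⟩ := hsupp p hgp
  obtain ⟨he, hmoved⟩ := hfin.mem_toFinset.1 he
  exact hmoved (hh.map_eq_of_map_prefix_const hnc he hc hp)

theorem stretch_insertGaps_comp (hh : IsInducedIso C w v h) (hnc : ¬ ContractingPair C w v)
    {g : Word → ℕ} (hg : ∀ c ∈ C, insertGaps g c = c)
    (hgap : ∀ e ∈ MCAT C w, h e ≠ e → (insertGaps g e).length ≤ g (h e)) :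
    Stretch C (insertGaps g ∘ w) (insertGaps g ∘ v) := by
  refine hh.stretch_comp (isTreeEmbedding_insertGaps g) hg fun d hd e he hde hne => ?_
  by_cases hfix : h e = e
  · rw [hfix, hh.map_eq_of_prefix_fixed hnc hd he hde hfix]
  · have hwide := length_insertGaps_add_gap_le g ((hh.2.1 d hd e he).1.1 hde)
      (hh.1.injOn.ne hd he hne)
    have := hgap e he hfix
    omega

end IsInducedIso

end Noncontracting

theorem stmt9_general (C : List Word)
    {Q : Type*} {n : ℕ}
    (step : (Q × (Fin n → Word)) → (Q × (Fin n → Word)) → Prop)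
    (hstep : TypeInvariant C step)
    {N : ℕ} (r : Fin (N + 1) → Q × (Fin n → Word)) (hr : IsFinRun step r)
    (hstate : (r 0).1 = (r (Fin.last N)).1)
    (htyp : SameTyp C (r 0).2 (r (Fin.last N)).2)
    (hnc : ¬ ContractingPair C (r 0).2 (r (Fin.last N)).2) :
    ∃ r' : Fin (N + 1) → Q × (Fin n → Word),
      IsFinRun step r' ∧
      (∀ i : Fin (N + 1), (r' i).1 = (r i).1) ∧
      (∀ i : Fin (N + 1), ConfigLe C (r i) (r' i)) ∧
      ConfigLe C (r' 0) (r' (Fin.last N)) := by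
  obtain ⟨h, hh⟩ := htyp
  obtain ⟨g, hg, hgap⟩ := hh.exists_gaps hnc
  exact ⟨fun i => ((r i).1, insertGaps g ∘ (r i).2),
    hstep.isFinRun_map (isTreeEmbedding_insertGaps g) hg hr, fun _ => rfl,
    fun i => ⟨rfl, stretch_insertGaps hg (r i).2⟩,
    hstate, hh.stretch_insertGaps_comp hnc hg hgap⟩

/-- For every noncontracting loop there is a stretching loop of the same length, with the
same states, which is pointwise `≼*`-larger. -/
theorem stmt9 (C : List Word) (hC : ∀ c ∈ C, ∀ c' : Word, c' <+: c → c' ∈ C)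
    {Q : Type*} {n : ℕ}
    (step : (Q × (Fin n → Word)) → (Q × (Fin n → Word)) → Prop)
    (hstep : TypeInvariant C step)
    {N : ℕ} (r : Fin (N + 1) → Q × (Fin n → Word)) (hr : IsFinRun step r)
    (hstate : (r 0).1 = (r (Fin.last N)).1)
    (htyp : SameTyp C (r 0).2 (r (Fin.last N)).2)
    (hnc : ¬ ContractingPair C (r 0).2 (r (Fin.last N)).2) :
    ∃ r' : Fin (N + 1) → Q × (Fin n → Word),
      IsFinRun step r' ∧
      (∀ i : Fin (N + 1), (r' i).1 = (r i).1) ∧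
      (∀ i : Fin (N + 1), ConfigLe C (r i) (r' i)) ∧
      ConfigLe C (r' 0) (r' (Fin.last N)) :=
  stmt9_general C step hstep r hr hstate htyp hnc

end CLTL
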